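/- arXiv:2210.03545 — 2 statements merged into one kernel-verified Lean document; each statement's English description precedes it below -/
import Mathlib

section
/- There exist constants c, c' > 0 such that for all sufficiently large n: 2^{c·(log n)²} ≤ r(K_5^(3) − e, S_n) ≤ 2^{c'·n^{2/3}·log n}. -/
/-- A red copy of `K₅⁽³⁾ − e`: a 5-element vertex set with at least nine of its ten
3-element subsets red (red = `true`). -/
def HasRedK5e (N : ℕ) (χ : Finset (Fin N) → Bool) : Prop :=
  ∃ S : Finset (Fin N), S.card = 5 ∧
    9 ≤ ((S.powersetCard 3).filter fun T => χ T = true).card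

/-- A blue copy of the star `Sₙ` (blue = `false`). -/
def HasBlueStar (N n : ℕ) (χ : Finset (Fin N) → Bool) : Prop :=
  ∃ v : Fin N, ∃ S : Finset (Fin N), v ∉ S ∧ S.card = n ∧
    ∀ a ∈ S, ∀ b ∈ S, a ≠ b → χ {v, a, b} = false

/-- The Ramsey number `r(K₅⁽³⁾ − e, Sₙ)`: the least `N` such that every 2-coloring of
`K_N^(3)` contains a red `K₅⁽³⁾ − e` or a blue `Sₙ`. -/
noncomputable def ramseyK5eStar (n : ℕ) : ℕ :=
  sInf {N : ℕ | ∀ χ : Finset (Fin N) → Bool, HasRedK5e N χ ∨ HasBlueStar N n χ}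

theorem exists_max_sub {α : Type*} (W : Finset α) (p : Finset α → Prop) (h0 : p ∅) :
    ∃ I, (I ⊆ W ∧ p I) ∧ ∀ J, J ⊆ W ∧ p J → J.card ≤ I.card := by
  classical
  obtain ⟨I, hI, hmax⟩ := Finset.exists_max_image (W.powerset.filter p) Finset.card
    ⟨∅, by simp [h0]⟩
  refine ⟨I, by simpa using hI, fun J hJ => hmax J (by simpa using hJ)⟩

theorem es_ramsey {α : Type*} [DecidableEq α] (R : α → α → Prop) (hR : ∀ x y, R x y → R y x)
    (b : ℕ) : ∀ (a : ℕ) (W : Finset α), b ^ a ≤ W.card →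
    (∃ A ⊆ W, A.card = a ∧ ∀ x ∈ A, ∀ y ∈ A, x ≠ y → R x y) ∨
    (∃ B ⊆ W, B.card = b ∧ ∀ x ∈ B, ∀ y ∈ B, x ≠ y → ¬ R x y) := by
  classical
  intro a
  induction a with
  | zero => intro W _; left; exact ⟨∅, by simp, by simp, by simp⟩
  | succ a ih =>
    intro W hW
    by_cases hB : ∃ B ⊆ W, B.card = b ∧ ∀ x ∈ B, ∀ y ∈ B, x ≠ y → ¬ R x y
    · right; exact hB
    left
    obtain ⟨I, hI, hmax⟩ := exists_max_sub W
      (fun I => ∀ x ∈ I, ∀ y ∈ I, x ≠ y → ¬ R x y) (by simp)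
    obtain ⟨hIW, hI⟩ := hI
    have hIb : I.card < b := by
      by_contra hc
      push Not at hc
      obtain ⟨B, hBI, hBc⟩ := Finset.exists_subset_card_eq hc
      exact hB ⟨B, hBI.trans hIW, hBc, fun x hx y hy => hI x (hBI hx) y (hBI hy)⟩
    have hcov : W ⊆ I.biUnion (fun v => insert v (W.filter (fun w => w ≠ v ∧ R v w))) := by
      intro w hw
      rw [Finset.mem_biUnion]
      by_contra hc
      push Not at hc
      have hwI : w ∉ I := fun h => hc w h (Finset.mem_insert_self _ _)
      have h1 : ∀ v ∈ I, ¬ R v w := by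
        intro v hv hr
        apply hc v hv
        rw [Finset.mem_insert, Finset.mem_filter]
        right
        exact ⟨hw, fun h => hwI (h ▸ hv), hr⟩
      have := hmax (insert w I) (by
        refine ⟨Finset.insert_subset hw hIW, ?_⟩
        intro x hx y hy hxy
        rw [Finset.mem_insert] at hx hy
        rcases hx with rfl | hx <;> rcases hy with rfl | hy
        · exact absurd rfl hxy
        · exact fun h => h1 y hy (hR _ _ h)
        · exact h1 x hx
        · exact hI x hx y hy hxy)
      rw [Finset.card_insert_of_notMem hwI] at this
      omega
    have hex : ∃ v ∈ I, b ^ a ≤ (W.filter (fun w => w ≠ v ∧ R v w)).card := by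
      by_contra hc
      push Not at hc
      have h1 := (Finset.card_le_card hcov).trans Finset.card_biUnion_le
      have h2 : ∑ v ∈ I, (insert v (W.filter (fun w => w ≠ v ∧ R v w))).card ≤ ∑ v ∈ I, b ^ a := by
        apply Finset.sum_le_sum
        intro v hv
        exact (Finset.card_insert_le _ _).trans (hc v hv)
      rw [Finset.sum_const, smul_eq_mul] at h2
      have h3 : (I.card + 1) * b ^ a ≤ b * b ^ a := Nat.mul_le_mul_right _ hIb
      have h4 : 0 < b ^ a := Nat.pow_pos (by omega)
      rw [pow_succ] at hW
      nlinarith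
    obtain ⟨v, hv, hcard⟩ := hex
    rcases ih _ hcard with ⟨A, hA, hAc, hAR⟩ | ⟨B, hBs, hBc, hBR⟩
    · have hvA : v ∉ A := fun h => by
        have := hA h
        rw [Finset.mem_filter] at this
        exact this.2.1 rfl
      refine ⟨insert v A, ?_, ?_, ?_⟩
      · exact Finset.insert_subset (hIW hv) (hA.trans (Finset.filter_subset _ _))
      · rw [Finset.card_insert_of_notMem hvA, hAc]
      · have h1 : ∀ w ∈ A, R v w := fun w hw => by
          have := hA hw
          rw [Finset.mem_filter] at this
          exact this.2.2
        intro x hx y hy hxy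
        rw [Finset.mem_insert] at hx hy
        rcases hx with rfl | hx <;> rcases hy with rfl | hy
        · exact absurd rfl hxy
        · exact h1 y hy
        · exact hR _ _ (h1 x hx)
        · exact hAR x hx y hy hxy
    · exact absurd ⟨B, hBs.trans (Finset.filter_subset _ _), hBc, hBR⟩ hB

theorem card_small_subsets {α : Type*} [DecidableEq α] (I : Finset α) (m n : ℕ) (h : I.card < n) :
    (I.powerset.filter (fun S => S.card ≤ m)).card ≤ n ^ m := by
  classical
  induction m with
  | zero =>
    have : I.powerset.filter (fun S => S.card ≤ 0) ⊆ {∅} := by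
      intro S hS
      simp at hS
      simp [hS.2]
    simpa using Finset.card_le_card this
  | succ m ih =>
    have hsub : I.powerset.filter (fun S => S.card ≤ m + 1) ⊆
        ((I.powerset.filter (fun S => S.card ≤ m)) ×ˢ (insert none (I.image some))).image
          (fun p => match p.2 with
            | none => p.1
            | some a => insert a p.1) := by
      intro S hS
      rw [Finset.mem_filter, Finset.mem_powerset] at hS
      rw [Finset.mem_image]
      rcases Nat.lt_or_ge m S.card with hm | hm
      · have hne : S.Nonempty := Finset.card_pos.mp (by omega)
        obtain ⟨a, ha⟩ := hne
        refine ⟨(S.erase a, some a), ?_, ?_⟩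
        · rw [Finset.mem_product, Finset.mem_filter, Finset.mem_powerset]
          refine ⟨⟨(Finset.erase_subset _ _).trans hS.1, ?_⟩, ?_⟩
          · rw [Finset.card_erase_of_mem ha]; omega
          · simp [hS.1 ha]
        · simp [Finset.insert_erase ha]
      · refine ⟨(S, none), ?_, rfl⟩
        rw [Finset.mem_product, Finset.mem_filter, Finset.mem_powerset]
        exact ⟨⟨hS.1, hm⟩, by simp⟩
    refine (Finset.card_le_card hsub).trans (Finset.card_image_le.trans ?_)
    rw [Finset.card_product, pow_succ]
    apply Nat.mul_le_mul ih
    exact (Finset.card_insert_le _ _).trans ((Nat.succ_le_succ Finset.card_image_le).trans h)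

/-- Erdős–Szemerédi type statement. -/
theorem es_sparse {α : Type*} [DecidableEq α] (R : α → α → Prop) [DecidableRel R]
    (hR : ∀ x y, R x y → R y x) (Y : Finset α) (s n m : ℕ) (hn : 0 < n)
    (hm : 16 * n ≤ s * m)
    (hM : 4 * (n ^ m * (n ^ 3) ^ (m + 1) + n) ≤ Y.card)
    (hdeg : s * ∑ y ∈ Y, (Y.filter (fun w => y ≠ w ∧ R y w)).card ≤ 2 * Y.card ^ 2)
    (hind : ¬ ∃ B ⊆ Y, B.card = n ∧ ∀ x ∈ B, ∀ y ∈ B, x ≠ y → ¬ R x y) :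
    ∃ A ⊆ Y, A.card = n ^ 3 ∧ ∀ x ∈ A, ∀ y ∈ A, x ≠ y → R x y := by
  classical
  set M := Y.card with hMdef
  have hMpos : 0 < M := by omega
  set deg : α → ℕ := fun y => (Y.filter (fun w => y ≠ w ∧ R y w)).card with hdegdef
  set D := Y.filter (fun y => s * deg y ≤ 4 * M) with hD
  have hDY : D ⊆ Y := Finset.filter_subset _ _
  have hDc : M ≤ 2 * D.card := by
    have h1 : (Y.filter (fun y => ¬ s * deg y ≤ 4 * M)).card * (4 * M) ≤ s * ∑ y ∈ Y, deg y := by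
      rw [Finset.mul_sum]
      calc _ = ∑ y ∈ Y.filter (fun y => ¬ s * deg y ≤ 4 * M), 4 * M := by
            rw [Finset.sum_const, smul_eq_mul]
        _ ≤ ∑ y ∈ Y.filter (fun y => ¬ s * deg y ≤ 4 * M), s * deg y := by
            apply Finset.sum_le_sum
            intro y hy
            rw [Finset.mem_filter] at hy
            omega
        _ ≤ _ := Finset.sum_le_sum_of_subset (Finset.filter_subset _ _)
    have h2 := h1.trans hdeg
    have h3 : (Y.filter (fun y => ¬ s * deg y ≤ 4 * M)).card * 2 ≤ M := by
      by_contra hc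
      rw [not_le] at hc
      nlinarith
    have h4 : D.card + (Y.filter (fun y => ¬ s * deg y ≤ 4 * M)).card = M :=
      Finset.card_filter_add_card_filter_not _
    omega
  obtain ⟨I, hI, hmax⟩ := exists_max_sub D
    (fun I => ∀ x ∈ I, ∀ y ∈ I, x ≠ y → ¬ R x y) (by simp)
  obtain ⟨hID, hI⟩ := hI
  have hIn : I.card < n := by
    by_contra hc
    push Not at hc
    obtain ⟨B, hBI, hBc⟩ := Finset.exists_subset_card_eq hc
    exact hind ⟨B, hBI.trans (hID.trans hDY), hBc, fun x hx y hy => hI x (hBI hx) y (hBI hy)⟩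
  set nb : α → Finset α := fun y => I.filter (fun x => y ≠ x ∧ R y x) with hnb
  set P := D.filter (fun y => (nb y).card ≤ m) with hP
  have hPc : M ≤ 4 * P.card := by
    have hdc : ∑ y ∈ D, (nb y).card = ∑ x ∈ I, (D.filter (fun y => y ≠ x ∧ R y x)).card := by
      simp only [hnb, Finset.card_filter]
      exact Finset.sum_comm
    have h1 : s * ∑ y ∈ D, (nb y).card ≤ n * (4 * M) := by
      rw [hdc, Finset.mul_sum]
      calc _ ≤ ∑ x ∈ I, 4 * M := by
            apply Finset.sum_le_sum
            intro x hx
            have h5 := (Finset.mem_filter.mp (hID hx)).2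
            refine le_trans (Nat.mul_le_mul_left _ ?_) h5
            apply Finset.card_le_card
            intro y hy
            rw [Finset.mem_filter] at hy ⊢
            exact ⟨hDY hy.1, hy.2.1.symm, hR _ _ hy.2.2⟩
        _ = I.card * (4 * M) := by rw [Finset.sum_const, smul_eq_mul]
        _ ≤ _ := Nat.mul_le_mul_right _ hIn.le
    have h2 : (D.filter (fun y => ¬ (nb y).card ≤ m)).card * m ≤ ∑ y ∈ D, (nb y).card := by
      calc _ = ∑ y ∈ D.filter (fun y => ¬ (nb y).card ≤ m), m := by
            rw [Finset.sum_const, smul_eq_mul]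
        _ ≤ ∑ y ∈ D.filter (fun y => ¬ (nb y).card ≤ m), (nb y).card := by
            apply Finset.sum_le_sum
            intro y hy
            rw [Finset.mem_filter] at hy
            omega
        _ ≤ _ := Finset.sum_le_sum_of_subset (Finset.filter_subset _ _)
    have h4 : P.card + (D.filter (fun y => ¬ (nb y).card ≤ m)).card = D.card :=
      Finset.card_filter_add_card_filter_not _
    set Q := (D.filter (fun y => ¬ (nb y).card ≤ m)).card
    have h5 : Q * (16 * n) ≤ n * (4 * M) := by
      calc Q * (16 * n) ≤ Q * (s * m) := Nat.mul_le_mul_left _ hm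
        _ = s * (Q * m) := by ring
        _ ≤ _ := (Nat.mul_le_mul_left _ h2).trans h1
    have h6 : Q * 4 ≤ M := by
      by_contra hc
      rw [not_le] at hc
      nlinarith
    omega
  have hP' : n ^ m * (n ^ 3) ^ (m + 1) ≤ (P \ I).card := by
    have := Finset.le_card_sdiff I P
    omega
  obtain ⟨S, hS, hU⟩ := Finset.exists_le_card_fiber_of_mul_le_card_of_maps_to
    (s := P \ I) (t := I.powerset.filter (fun S => S.card ≤ m)) (f := nb) (n := (n ^ 3) ^ (m + 1))
    (by
      intro y hy
      rw [Finset.mem_sdiff] at hy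
      rw [Finset.mem_filter, Finset.mem_powerset]
      exact ⟨Finset.filter_subset _ _, (Finset.mem_filter.mp hy.1).2⟩)
    ⟨∅, by simp⟩
    (le_trans (Nat.mul_le_mul_right _ (card_small_subsets I m n hIn)) hP')
  rw [Finset.mem_filter, Finset.mem_powerset] at hS
  set U := (P \ I).filter (fun y => nb y = S) with hUdef
  have hUP : ∀ y ∈ U, y ∈ D ∧ y ∉ I ∧ nb y = S := by
    intro y hy
    rw [hUdef, Finset.mem_filter, Finset.mem_sdiff] at hy
    exact ⟨(Finset.mem_filter.mp hy.1.1).1, hy.1.2, hy.2⟩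
  rcases es_ramsey (fun x y => ¬ R x y) (fun x y h h' => h (hR _ _ h')) (n ^ 3) (m + 1) U hU with
    ⟨J, hJ, hJc, hJR⟩ | ⟨A, hA, hAc, hAR⟩
  · exfalso
    have hdis : Disjoint (I \ S) J := by
      rw [Finset.disjoint_left]
      intro x hx hx'
      exact (hUP x (hJ hx')).2.1 (Finset.mem_sdiff.mp hx).1
    have hcross : ∀ x ∈ I \ S, ∀ y ∈ J, ¬ R y x := by
      intro x hx y hy hr
      have h1 := hUP y (hJ hy)
      rw [Finset.mem_sdiff] at hx
      apply hx.2
      rw [← h1.2.2, hnb, Finset.mem_filter]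
      exact ⟨hx.1, fun h => h1.2.1 (h ▸ hx.1), hr⟩
    have := hmax ((I \ S) ∪ J) (by
      refine ⟨Finset.union_subset (Finset.sdiff_subset.trans hID) (fun y hy => (hUP y (hJ hy)).1), ?_⟩
      intro x hx y hy hxy
      rw [Finset.mem_union] at hx hy
      rcases hx with hx | hx <;> rcases hy with hy | hy
      · exact hI x (Finset.mem_sdiff.mp hx).1 y (Finset.mem_sdiff.mp hy).1 hxy
      · exact fun h => hcross x hx y hy (hR _ _ h)
      · exact hcross y hy x hx
      · exact hJR x hx y hy hxy)
    rw [Finset.card_union_of_disjoint hdis] at this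
    have h7 := Finset.le_card_sdiff S I
    omega
  · refine ⟨A, fun y hy => hDY (hUP y (hA hy)).1, hAc, fun x hx y hy hxy => ?_⟩
    exact not_not.mp (hAR x hx y hy hxy)

theorem hasRedK5e_of {N : ℕ} (χ : Finset (Fin N) → Bool) (f : Fin 5 ↪ Fin N)
    (h : ∀ T : Finset (Fin 5), T.card = 3 → T ≠ {2, 3, 4} → χ (T.map f) = true) :
    HasRedK5e N χ := by
  classical
  refine ⟨Finset.univ.map f, by simp, ?_⟩
  have hsub : ((Finset.univ.powersetCard 3).erase ({2, 3, 4} : Finset (Fin 5))).map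
      ⟨Finset.map f, Finset.map_injective f⟩ ⊆
      ((Finset.univ.map f).powersetCard 3).filter fun T => χ T = true := by
    intro T hT
    rw [Finset.mem_map] at hT
    obtain ⟨T', hT', rfl⟩ := hT
    rw [Finset.mem_erase, Finset.mem_powersetCard] at hT'
    rw [Finset.mem_filter, Finset.mem_powersetCard]
    refine ⟨⟨?_, ?_⟩, ?_⟩
    · exact Finset.map_subset_map.mpr hT'.2.1
    · simpa using hT'.2.2
    · exact h T' hT'.2.2 hT'.1
  refine le_trans ?_ (Finset.card_le_card hsub)
  rw [Finset.card_map]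
  decide

theorem fin5_triples : ∀ T : Finset (Fin 5), T.card = 3 → T ≠ {2, 3, 4} →
    T = {0, 1, 2} ∨ T = {0, 1, 3} ∨ T = {0, 1, 4} ∨ T = {0, 2, 3} ∨ T = {0, 2, 4} ∨
    T = {0, 3, 4} ∨ T = {1, 2, 3} ∨ T = {1, 2, 4} ∨ T = {1, 3, 4} := by
  decide

theorem hasRedK5e_of' {N : ℕ} (χ : Finset (Fin N) → Bool) (a b c d e : Fin N)
    (hd : [a, b, c, d, e].Nodup)
    (h1 : χ {a, b, c} = true) (h2 : χ {a, b, d} = true) (h3 : χ {a, b, e} = true)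
    (h4 : χ {a, c, d} = true) (h5 : χ {a, c, e} = true) (h6 : χ {a, d, e} = true)
    (h7 : χ {b, c, d} = true) (h8 : χ {b, c, e} = true) (h9 : χ {b, d, e} = true) :
    HasRedK5e N χ := by
  classical
  have hinj : Function.Injective ![a, b, c, d, e] := by
    have := List.nodup_ofFn (f := ![a, b, c, d, e])
    rw [← this]
    simpa using hd
  refine hasRedK5e_of χ ⟨![a, b, c, d, e], hinj⟩ ?_
  intro T hT hT'
  rcases fin5_triples T hT hT' with rfl | rfl | rfl | rfl | rfl | rfl | rfl | rfl | rfl <;>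
    simpa [Finset.map_insert] using by assumption

theorem upper_main (n s m N : ℕ) (hn : 3 ≤ n) (hs : 2 ≤ s) (hm : 16 * n ≤ s * m)
    (hN : n ^ s + (n ^ s) ^ s * n ^ (4 * m + 5) ≤ N) (χ : Finset (Fin N) → Bool) :
    HasRedK5e N χ ∨ HasBlueStar N n χ := by
  classical
  by_contra hcon
  push Not at hcon
  obtain ⟨hK5, hst⟩ := hcon
  have hsym : ∀ v x y, χ {v, x, y} = true → χ {v, y, x} = true := by
    intro v x y h
    rwa [Finset.pair_comm y x]
  have hrot : ∀ v x y, χ {v, x, y} = true → χ {x, v, y} = true := by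
    intro v x y h
    rwa [Finset.insert_comm x v]
  have hno : ∀ v : Fin N, ∀ B : Finset (Fin N), v ∉ B → B.card = n →
      (∀ x ∈ B, ∀ y ∈ B, x ≠ y → ¬ χ {v, x, y} = true) → False := by
    intro v B hv hB h
    exact hst ⟨v, B, hv, hB, fun a ha b hb hab => by simpa using h a ha b hb hab⟩
  obtain ⟨X, -, hX⟩ := Finset.exists_subset_card_eq (s := (Finset.univ : Finset (Fin N))) (n := n ^ s)
    (by simp; exact le_trans (Nat.le_add_right _ _) hN)
  have hstep : ∀ y : Fin N, ∃ A : Finset (Fin N), y ∉ X → A ⊆ X ∧ A.card = s ∧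
      ∀ x ∈ A, ∀ x' ∈ A, x ≠ x' → χ {y, x, x'} = true := by
    intro y
    by_cases hy : y ∈ X
    · exact ⟨∅, fun h => absurd hy h⟩
    rcases es_ramsey (fun a b => χ {y, a, b} = true) (hsym y) n s X hX.ge with
      ⟨A, hA, hAc, hAR⟩ | ⟨B, hB, hBc, hBR⟩
    · exact ⟨A, fun _ => ⟨hA, hAc, hAR⟩⟩
    · exact (hno y B (fun h => hy (hB h)) hBc hBR).elim
  choose Kf hKf using hstep
  obtain ⟨K, hK, hY⟩ := Finset.exists_le_card_fiber_of_mul_le_card_of_maps_to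
    (s := Xᶜ) (t := X.powersetCard s) (f := Kf) (n := n ^ (4 * m + 5))
    (by
      intro y hy
      have := hKf y (Finset.mem_compl.mp hy)
      exact Finset.mem_powersetCard.mpr ⟨this.1, this.2.1⟩)
    (by
      rw [Finset.powersetCard_nonempty, hX]
      calc s ≤ 2 ^ s := Nat.lt_two_pow_self.le
        _ ≤ n ^ s := Nat.pow_le_pow_left (by omega) _)
    (by
      rw [Finset.card_powersetCard, Finset.card_compl, hX, Fintype.card_fin]
      have : (n ^ s).choose s * n ^ (4 * m + 5) ≤ (n ^ s) ^ s * n ^ (4 * m + 5) :=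
        Nat.mul_le_mul_right _ (Nat.choose_le_pow _ _)
      omega)
  rw [Finset.mem_powersetCard] at hK
  set Y := Xᶜ.filter (fun y => Kf y = K) with hYdef
  have hYX : ∀ y ∈ Y, y ∉ X := fun y hy => Finset.mem_compl.mp (Finset.mem_filter.mp hy).1
  have hYK : ∀ y ∈ Y, ∀ x ∈ K, x ≠ y := fun y hy x hx h => hYX y hy (h ▸ hK.1 hx)
  have hYr : ∀ y ∈ Y, ∀ x ∈ K, ∀ x' ∈ K, x ≠ x' → χ {y, x, x'} = true := by
    intro y hy
    have h1 := hKf y (hYX y hy)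
    rw [(Finset.mem_filter.mp hy).2] at h1
    exact h1.2.2
  -- every pair has at most two red common vertices in K
  have htwo : ∀ y ∈ Y, ∀ w ∈ Y, (K.filter (fun x => y ≠ w ∧ χ {x, y, w} = true)).card ≤ 2 := by
    intro y hy w hw
    by_contra hc
    rw [not_le] at hc
    obtain ⟨a, ha, b, hb, c, hc', hab, hac, hbc⟩ := Finset.two_lt_card.mp hc
    rw [Finset.mem_filter] at ha hb hc'
    apply hK5
    have e1 : ∀ x, χ {x, y, w} = true → χ {y, w, x} = true := by
      intro x hx
      exact hsym _ _ _ (hrot _ _ _ hx)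
    refine hasRedK5e_of' χ y w a b c ?_ (e1 a ha.2.2) (e1 b hb.2.2) (e1 c hc'.2.2)
      (hYr y hy a ha.1 b hb.1 hab) (hYr y hy a ha.1 c hc'.1 hac) (hYr y hy b hb.1 c hc'.1 hbc)
      (hYr w hw a ha.1 b hb.1 hab) (hYr w hw a ha.1 c hc'.1 hac) (hYr w hw b hb.1 c hc'.1 hbc)
    have q := ha.2.1
    have q1 := (hYK y hy a ha.1).symm
    have q2 := (hYK y hy b hb.1).symm
    have q3 := (hYK y hy c hc'.1).symm
    have q4 := (hYK w hw a ha.1).symm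
    have q5 := (hYK w hw b hb.1).symm
    have q6 := (hYK w hw c hc'.1).symm
    simp [q, q1, q2, q3, q4, q5, q6, hab, hac, hbc]
  have hsum : ∑ x ∈ K, ∑ y ∈ Y, (Y.filter (fun w => y ≠ w ∧ χ {x, y, w} = true)).card
      ≤ 2 * Y.card ^ 2 := by
    calc _ = ∑ y ∈ Y, ∑ w ∈ Y, (K.filter (fun x => y ≠ w ∧ χ {x, y, w} = true)).card := by
          rw [Finset.sum_comm]
          apply Finset.sum_congr rfl
          intro y _
          simp only [Finset.card_filter]
          exact Finset.sum_comm
      _ ≤ ∑ y ∈ Y, ∑ w ∈ Y, 2 :=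
          Finset.sum_le_sum fun y hy => Finset.sum_le_sum fun w hw => htwo y hy w hw
      _ = _ := by simp; ring
  have hKne : K.Nonempty := Finset.card_pos.mp (by omega)
  obtain ⟨x, hx, hxs⟩ : ∃ x ∈ K,
      s * ∑ y ∈ Y, (Y.filter (fun w => y ≠ w ∧ χ {x, y, w} = true)).card ≤ 2 * Y.card ^ 2 := by
    by_contra hc
    have hc' : ∀ x ∈ K, 2 * Y.card ^ 2 <
      s * ∑ y ∈ Y, (Y.filter (fun w => y ≠ w ∧ χ {x, y, w} = true)).card := by
      intro x hx
      rw [← not_le]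
      exact fun h => hc ⟨x, hx, h⟩
    have h1 := Finset.sum_lt_sum_of_nonempty hKne hc'
    rw [Finset.sum_const, smul_eq_mul, hK.2, ← Finset.mul_sum] at h1
    exact absurd (Nat.mul_le_mul_left s hsum) (not_le.mpr h1)
  have hbig : 4 * (n ^ m * (n ^ 3) ^ (m + 1) + n) ≤ Y.card := by
    refine le_trans ?_ hY
    have h1 : n ^ m * (n ^ 3) ^ (m + 1) = n ^ (4 * m + 3) := by
      rw [← pow_mul, ← pow_add]; congr 1; ring
    have h2 : n ≤ n ^ (4 * m + 3) := Nat.le_self_pow (by omega) n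
    have h3 : n ^ (4 * m + 5) = n ^ (4 * m + 3) * n ^ 2 := by rw [← pow_add]
    rw [h1, h3]
    have h4 : 9 ≤ n ^ 2 := by nlinarith
    nlinarith
  obtain ⟨A, hA, hAc, hAR⟩ := es_sparse (fun y w => χ {x, y, w} = true) (hsym x) Y s n m (by omega) hm
    hbig hxs (by
      rintro ⟨B, hB, hBc, hBR⟩
      exact hno x B (fun h => hYX x (hB h) (hK.1 hx)) hBc hBR)
  obtain ⟨x', hx', hxx⟩ : ∃ x' ∈ K, x' ≠ x := Finset.exists_mem_ne (by omega) x
  rcases es_ramsey (fun a b => χ {x', a, b} = true) (hsym x') n 3 A hAc.ge with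
      ⟨T, hT, hTc, hTR⟩ | ⟨B, hB, hBc, hBR⟩
  · obtain ⟨a, b, c, hab, hac, hbc, rfl⟩ := Finset.card_eq_three.mp hTc
    have ha : a ∈ A := hT (by simp)
    have hb : b ∈ A := hT (by simp)
    have hc : c ∈ A := hT (by simp)
    apply hK5
    have e1 : ∀ y ∈ A, χ {x, x', y} = true := by
      intro y hy
      exact hsym _ _ _ (hrot _ _ _ (hYr y (hA hy) x hx x' hx' hxx.symm))
    refine hasRedK5e_of' χ x x' a b c ?_ (e1 a ha) (e1 b hb) (e1 c hc)
      (hAR a ha b hb hab) (hAR a ha c hc hac) (hAR b hb c hc hbc)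
      (hTR a (by simp) b (by simp) hab) (hTR a (by simp) c (by simp) hac)
      (hTR b (by simp) c (by simp) hbc)
    have q1 := (hYK a (hA ha) x hx)
    have q2 := (hYK b (hA hb) x hx)
    have q3 := (hYK c (hA hc) x hx)
    have q4 := (hYK a (hA ha) x' hx')
    have q5 := (hYK b (hA hb) x' hx')
    have q6 := (hYK c (hA hc) x' hx')
    simp [hxx.symm, q1, q2, q3, q4, q5, q6, hab, hac, hbc]
  · exact hno x' B (fun h => hYX x' (hA (hB h)) (hK.1 hx')) hBc hBR

theorem upper_real (n : ℕ) (hn : 8 ≤ n) :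
    ∃ N : ℕ, (∀ χ : Finset (Fin N) → Bool, HasRedK5e N χ ∨ HasBlueStar N n χ) ∧
      (N : ℝ) ≤ (2 : ℝ) ^ (600 * (n : ℝ) ^ ((2 : ℝ) / 3) * Real.logb 2 n) := by
  set u : ℝ := (n : ℝ) ^ ((1 : ℝ) / 3) with hu
  have hn0 : (0 : ℝ) ≤ n := Nat.cast_nonneg n
  have hnpos : (0 : ℝ) < n := by exact_mod_cast (by omega : 0 < n)
  have hu0 : 0 ≤ u := Real.rpow_nonneg hn0 _
  have hu3 : u ^ 3 = n := by
    rw [hu, ← Real.rpow_natCast, ← Real.rpow_mul hn0]; norm_num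
  have hu2 : u ^ 2 = (n : ℝ) ^ ((2 : ℝ) / 3) := by
    rw [hu, ← Real.rpow_natCast, ← Real.rpow_mul hn0]; norm_num
  have hu2' : 2 ≤ u := by
    by_contra hc
    rw [not_le] at hc
    have h1 : u ^ 3 < 2 ^ 3 := pow_lt_pow_left₀ hc hu0 (by norm_num)
    rw [hu3] at h1
    have h2 : (8 : ℝ) ≤ n := by exact_mod_cast hn
    norm_num at h1
    linarith
  set t := ⌊u⌋₊ with ht
  have ht2 : 2 ≤ t := Nat.le_floor (by exact_mod_cast hu2')
  have htu : (t : ℝ) ≤ u := Nat.floor_le hu0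
  have hut : u < t + 1 := Nat.lt_floor_add_one u
  have htt : (t : ℝ) ^ 2 ≤ (n : ℝ) ^ ((2 : ℝ) / 3) := by
    rw [← hu2]; exact pow_le_pow_left₀ (Nat.cast_nonneg t) htu 2
  have hlt : n < (t + 1) ^ 3 := by
    have : u ^ 3 < ((t : ℝ) + 1) ^ 3 := pow_lt_pow_left₀ hut hu0 (by norm_num)
    rw [hu3] at this
    exact_mod_cast this
  have hm : 16 * n ≤ t * (128 * t ^ 2) := by
    have h1 : (t + 1) ^ 3 ≤ (2 * t) ^ 3 := Nat.pow_le_pow_left (by omega) 3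
    have h2 : (2 * t) ^ 3 = 8 * t ^ 3 := by ring
    have h3 : t * (128 * t ^ 2) = 128 * t ^ 3 := by ring
    omega
  refine ⟨n ^ t + (n ^ t) ^ t * n ^ (4 * (128 * t ^ 2) + 5),
    fun χ => upper_main n t (128 * t ^ 2) _ (by omega) ht2 hm le_rfl χ, ?_⟩
  have hb : n ^ t + (n ^ t) ^ t * n ^ (4 * (128 * t ^ 2) + 5) ≤ n ^ (600 * t ^ 2) := by
    have h1 : (n ^ t) ^ t * n ^ (4 * (128 * t ^ 2) + 5) = n ^ (513 * t ^ 2 + 5) := by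
      rw [← pow_mul, ← pow_add]; congr 1; ring
    have h4 : t ≤ t ^ 2 := Nat.le_self_pow (by omega) t
    have h2 : n ^ t ≤ n ^ (513 * t ^ 2 + 5) := Nat.pow_le_pow_right (by omega) (by omega)
    have h3 : n ^ (513 * t ^ 2 + 5 + 1) ≤ n ^ (600 * t ^ 2) :=
      Nat.pow_le_pow_right (by omega) (by omega)
    rw [h1]
    rw [pow_succ] at h3
    have h5 : n ^ (513 * t ^ 2 + 5) * 2 ≤ n ^ (513 * t ^ 2 + 5) * n := Nat.mul_le_mul_left _ (by omega)
    omega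
  have hb' : ((n ^ t + (n ^ t) ^ t * n ^ (4 * (128 * t ^ 2) + 5) : ℕ) : ℝ) ≤
      ((n ^ (600 * t ^ 2) : ℕ) : ℝ) := by exact_mod_cast hb
  refine hb'.trans ?_
  have e1 : (2 : ℝ) ^ (600 * (n : ℝ) ^ ((2 : ℝ) / 3) * Real.logb 2 n) =
      (n : ℝ) ^ (600 * (n : ℝ) ^ ((2 : ℝ) / 3)) := by
    rw [mul_comm, Real.rpow_mul (by norm_num), Real.rpow_logb (by norm_num) (by norm_num) hnpos]
  rw [e1, Nat.cast_pow, ← Real.rpow_natCast]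
  apply Real.rpow_le_rpow_of_exponent_le
  · exact_mod_cast (by omega : 1 ≤ n)
  · push_cast
    linarith

theorem union_bound_exists {ι Q Ω : Type*} [Fintype Q] [DecidableEq Q] [Fintype Ω] [DecidableEq Ω]
    [Nonempty Ω] (I : Finset ι) (E : ι → Finset Q) (G : ι → Q → Finset Ω) (K L : ℕ) (hK : 0 < K)
    (hE : ∀ i ∈ I, L ≤ (E i).card)
    (hG : ∀ i ∈ I, ∀ q ∈ E i, Fintype.card Ω ≤ K * (G i q).card)
    (hlt : (I.card : ℝ) * (1 - 1 / (K : ℝ)) ^ L < 1) :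
    ∃ ω : Q → Ω, ∀ i ∈ I, ∃ q ∈ E i, ω q ∈ G i q := by
  classical
  by_contra hc
  push Not at hc
  have hK1 : (1 : ℝ) ≤ K := by exact_mod_cast hK
  have hKinv : 1 / (K : ℝ) ≤ 1 := by rw [div_le_one (by linarith)]; exact hK1
  have hKinv0 : 0 < 1 / (K : ℝ) := by positivity
  have hΩ : (0 : ℝ) < Fintype.card Ω := by exact_mod_cast Fintype.card_pos
  set F : ι → Finset (Q → Ω) := fun i =>
    Fintype.piFinset (fun q => if q ∈ E i then (G i q)ᶜ else Finset.univ) with hF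
  have hsub : (Finset.univ : Finset (Q → Ω)) ⊆ I.biUnion F := by
    intro ω _
    obtain ⟨i, hi, h⟩ := hc ω
    rw [Finset.mem_biUnion]
    refine ⟨i, hi, ?_⟩
    rw [hF, Fintype.mem_piFinset]
    intro q
    by_cases hq : q ∈ E i
    · simp [hq, h q hq]
    · simp [hq]
  have hcard : ∀ i ∈ I, ((F i).card : ℝ) ≤
      (Fintype.card Ω : ℝ) ^ Fintype.card Q * (1 - 1 / (K : ℝ)) ^ L := by
    intro i hi
    rw [hF, Fintype.card_piFinset, Nat.cast_prod]
    calc _ ≤ ∏ q : Q, ((Fintype.card Ω : ℝ) * (if q ∈ E i then (1 - 1 / (K : ℝ)) else 1)) := by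
          apply Finset.prod_le_prod
          · intro q _; positivity
          · intro q _
            by_cases hq : q ∈ E i
            · simp only [hq, if_true]
              rw [Finset.card_compl, Nat.cast_sub (Finset.card_le_univ _)]
              have h1 : (Fintype.card Ω : ℝ) ≤ K * (G i q).card := by exact_mod_cast hG i hi q hq
              have h2 : (Fintype.card Ω : ℝ) * (1 / K) ≤ (G i q).card := by
                rw [mul_one_div, div_le_iff₀ (by linarith)]; linarith
              linarith
            · simp [hq]
      _ = (Fintype.card Ω : ℝ) ^ Fintype.card Q * (1 - 1 / (K : ℝ)) ^ (E i).card := by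
          rw [Finset.prod_mul_distrib, Finset.prod_const, Finset.card_univ, Finset.prod_ite_mem]
          simp
      _ ≤ _ := by
          apply mul_le_mul_of_nonneg_left _ (by positivity)
          exact pow_le_pow_of_le_one (by linarith) (by linarith) (hE i hi)
  have h1 := (Finset.card_le_card hsub).trans Finset.card_biUnion_le
  have h2 : (Fintype.card Ω : ℝ) ^ Fintype.card Q ≤ ∑ i ∈ I, ((F i).card : ℝ) := by
    rw [Finset.card_univ, Fintype.card_fun] at h1
    exact_mod_cast h1
  have h3 := h2.trans (Finset.sum_le_sum hcard)
  rw [Finset.sum_const, nsmul_eq_mul] at h3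
  have h4 : (0 : ℝ) < (Fintype.card Ω : ℝ) ^ Fintype.card Q := by positivity
  nlinarith

theorem rs_code (D p m : ℕ) [Fact p.Prime] (hm : m = D * D) (hmp : m ≤ p) (hp : 2 ^ D ≤ p) :
    ∃ z : (Fin m → Bool) → Fin m → ZMod p, ∀ c d, c ≠ d →
      (Finset.univ.filter (fun r => z c r = z d r)).card ≤ D := by
  classical
  have hcard : Fintype.card (Fin m → Bool) ≤ Fintype.card (Fin D → ZMod p) := by
    simp only [Fintype.card_fun, Fintype.card_bool, Fintype.card_fin, ZMod.card]
    rw [hm, pow_mul]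
    exact Nat.pow_le_pow_left hp D
  obtain ⟨f⟩ := Function.Embedding.nonempty_of_card_le hcard
  set P : (Fin m → Bool) → Polynomial (ZMod p) := fun v =>
    ((Polynomial.degreeLTEquiv (ZMod p) D).symm (f v) : Polynomial (ZMod p)) with hP
  have hPdeg : ∀ v, (P v).degree < D := fun v =>
    Polynomial.mem_degreeLT.mp ((Polynomial.degreeLTEquiv (ZMod p) D).symm (f v)).2
  have hPinj : ∀ c d, P c = P d → c = d := by
    intro c d h
    apply f.injective
    apply (Polynomial.degreeLTEquiv (ZMod p) D).symm.injective
    exact Subtype.ext h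
  have hcast : Function.Injective (fun r : Fin m => ((r : ℕ) : ZMod p)) := by
    intro a b h
    have h' := (ZMod.natCast_eq_natCast_iff' _ _ _).mp h
    rw [Nat.mod_eq_of_lt (a.2.trans_le hmp), Nat.mod_eq_of_lt (b.2.trans_le hmp)] at h'
    exact Fin.ext h'
  refine ⟨fun v r => (P v).eval ((r : ℕ) : ZMod p), ?_⟩
  intro c d hcd
  by_contra hc
  rw [not_le] at hc
  apply hcd
  apply hPinj
  apply Polynomial.eq_of_degree_sub_lt_of_eval_finset_eq
    ((Finset.univ.filter (fun r : Fin m => (P c).eval ((r : ℕ) : ZMod p) =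
      (P d).eval ((r : ℕ) : ZMod p))).image (fun r : Fin m => ((r : ℕ) : ZMod p)))
  · rw [Finset.card_image_of_injective _ hcast]
    refine lt_of_le_of_lt (Polynomial.degree_sub_le _ _) ?_
    refine lt_trans (max_lt (hPdeg c) (hPdeg d)) ?_
    exact_mod_cast hc
  · intro x hx
    rw [Finset.mem_image] at hx
    obtain ⟨r, hr, rfl⟩ := hx
    exact (Finset.mem_filter.mp hr).2

/-- The value of the random data attached to a pair makes `v c d` red with outer vertex `v`. -/
def CondO {m : ℕ} {P : Type} (e : (Fin m → Bool) → (Fin m → Bool) → Fin m)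
    (z : (Fin m → Bool) → Fin m → P) (o : Fin m × P × (Fin m → Bool))
    (a c d : Fin m → Bool) : Prop :=
  a ≠ c ∧ a ≠ d ∧ c ≠ d ∧ e a c = o.1 ∧ e a d = o.1 ∧ z a (e c d) = o.2.1 ∧
    ∀ r, z c r = z d r → a r = o.2.2 r

/-- Red triples of the construction. -/
def RedT {m : ℕ} {P : Type} (e : (Fin m → Bool) → (Fin m → Bool) → Fin m)
    (z : (Fin m → Bool) → Fin m → P)
    (ω : Sym2 (Fin m → Bool) → Fin m × P × (Fin m → Bool))
    (T : Finset (Fin m → Bool)) : Prop :=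
  ∃ a c d, T = {a, c, d} ∧ CondO e z (ω s(c, d)) a c d

theorem exists_first_diff (m : ℕ) (hm : 0 < m) : ∃ e : (Fin m → Bool) → (Fin m → Bool) → Fin m,
    ∀ c d, c ≠ d → c (e c d) ≠ d (e c d) ∧ ∀ r < e c d, c r = d r := by
  classical
  have h : ∀ c d : Fin m → Bool, ∃ r : Fin m, c ≠ d → c r ≠ d r ∧ ∀ r' < r, c r' = d r' := by
    intro c d
    by_cases hcd : c = d
    · exact ⟨⟨0, hm⟩, fun h => absurd hcd h⟩
    · have hne : (Finset.univ.filter (fun r => c r ≠ d r)).Nonempty := by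
        obtain ⟨r, hr⟩ := Function.ne_iff.mp hcd
        exact ⟨r, by simpa using hr⟩
      refine ⟨Finset.min' _ hne, fun _ => ⟨?_, ?_⟩⟩
      · exact (Finset.mem_filter.mp (Finset.min'_mem _ hne)).2
      · intro r' hr'
        by_contra hcc
        have := Finset.min'_le (Finset.univ.filter (fun r => c r ≠ d r)) r' (by simpa using hcc)
        exact absurd hr' (not_lt.mpr this)
  choose e he using h
  exact ⟨e, he⟩

theorem no_red_K4 {m : ℕ} {P : Type} (e : (Fin m → Bool) → (Fin m → Bool) → Fin m)
    (he : ∀ c d, c ≠ d → c (e c d) ≠ d (e c d) ∧ ∀ r < e c d, c r = d r)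
    (z : (Fin m → Bool) → Fin m → P)
    (ω : Sym2 (Fin m → Bool) → Fin m × P × (Fin m → Bool))
    (Q : Finset (Fin m → Bool)) (hQ : Q.card = 4)
    (hred : ∀ T ⊆ Q, T.card = 3 → RedT e z ω T) : False := by
  classical
  have hsymm : ∀ c d, c ≠ d → e c d = e d c := by
    intro c d hcd
    obtain ⟨h1, h2⟩ := he c d hcd
    obtain ⟨h3, h4⟩ := he d c hcd.symm
    rcases lt_trichotomy (e c d) (e d c) with h | h | h
    · exact absurd (h4 _ h).symm h1
    · exact h
    · exact absurd (h2 _ h).symm h3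
  have hultra : ∀ c a d, c ≠ a → c ≠ d → a ≠ d → e c a = e c d → e c a < e a d := by
    intro c a d h1 h2 h3 h4
    obtain ⟨p1, p2⟩ := he c a h1
    obtain ⟨q1, q2⟩ := he c d h2
    obtain ⟨r1, r2⟩ := he a d h3
    rw [← h4] at q1 q2
    by_contra hc
    rcases lt_or_eq_of_le (not_lt.mp hc) with h | h
    · exact r1 ((p2 _ h).symm.trans (q2 _ h))
    · rw [h] at r1
      revert p1 q1 r1
      cases c (e c a) <;> cases a (e c a) <;> cases d (e c a) <;> simp
  have hcsymm : ∀ a c d, CondO e z (ω s(c, d)) a c d → CondO e z (ω s(d, c)) a d c := by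
    intro a c d h
    obtain ⟨h1, h2, h3, h4, h5, h6, h7⟩ := h
    rw [Sym2.eq_swap]
    exact ⟨h2, h1, h3.symm, h5, h4, hsymm c d h3 ▸ h6, fun r hr => h7 r hr.symm⟩
  have hthree : ∀ x y w, x ∈ Q → y ∈ Q → w ∈ Q → x ≠ y → x ≠ w → y ≠ w →
      CondO e z (ω s(y, w)) x y w ∨ CondO e z (ω s(x, w)) y x w ∨ CondO e z (ω s(x, y)) w x y := by
    intro x y w hx hy hw hxy hxw hyw
    obtain ⟨a, c, d, hT, hcond⟩ := hred {x, y, w} (by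
      intro t ht
      simp only [Finset.mem_insert, Finset.mem_singleton] at ht
      rcases ht with rfl | rfl | rfl <;> assumption)
      (Finset.card_eq_three.mpr ⟨x, y, w, hxy, hxw, hyw, rfl⟩)
    have m1 : x = a ∨ x = c ∨ x = d := by
      have : x ∈ ({a, c, d} : Finset (Fin m → Bool)) := hT ▸ (by simp)
      simpa using this
    have m2 : y = a ∨ y = c ∨ y = d := by
      have : y ∈ ({a, c, d} : Finset (Fin m → Bool)) := hT ▸ (by simp)
      simpa using this
    have m3 : w = a ∨ w = c ∨ w = d := by
      have : w ∈ ({a, c, d} : Finset (Fin m → Bool)) := hT ▸ (by simp)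
      simpa using this
    have hcond' := hcsymm _ _ _ hcond
    clear hT
    rcases m1 with rfl | rfl | rfl <;> rcases m2 with rfl | rfl | rfl <;>
      rcases m3 with rfl | rfl | rfl <;>
      first
        | exact absurd rfl hxy
        | exact absurd rfl hxw
        | exact absurd rfl hyw
        | exact Or.inl hcond
        | exact Or.inl hcond'
        | exact Or.inr (Or.inl hcond)
        | exact Or.inr (Or.inl hcond')
        | exact Or.inr (Or.inr hcond)
        | exact Or.inr (Or.inr hcond')
  obtain ⟨⟨c, d⟩, hcd, hmax⟩ := Finset.exists_max_image Q.offDiag (fun q => e q.1 q.2)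
    (by
      rw [← Finset.card_pos, Finset.offDiag_card, hQ]; norm_num)
  rw [Finset.mem_offDiag] at hcd
  obtain ⟨hc, hd, hcd⟩ := hcd
  have hmax' : ∀ x y, x ∈ Q → y ∈ Q → x ≠ y → e x y ≤ e c d := fun x y hx hy hxy =>
    hmax (x, y) (Finset.mem_offDiag.mpr ⟨hx, hy, hxy⟩)
  have h2 : 1 < (Q \ {c, d}).card := by
    have h1 : ({c, d} : Finset (Fin m → Bool)) ⊆ Q := by
      intro t ht
      simp only [Finset.mem_insert, Finset.mem_singleton] at ht
      rcases ht with rfl | rfl <;> assumption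
    rw [Finset.card_sdiff_of_subset h1, hQ, Finset.card_pair hcd]; norm_num
  obtain ⟨a, ha, b, hb, hab⟩ := Finset.one_lt_card.mp h2
  simp only [Finset.mem_sdiff, Finset.mem_insert, Finset.mem_singleton, not_or] at ha hb
  have hout : ∀ x, x ∈ Q → x ≠ c → x ≠ d → CondO e z (ω s(c, d)) x c d := by
    intro x hx hxc hxd
    rcases hthree x c d hx hc hd hxc hxd hcd with h | h | h
    · exact h
    · exfalso
      obtain ⟨g1, g2, g3, g4, g5, -⟩ := h
      have h1 := hultra c x d g1 g2 g3 (g4.trans g5.symm)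
      have h2 := hmax' x d hx hd hxd
      rw [g4, ← g5] at h1
      exact absurd h1 (not_lt.mpr h2)
    · exfalso
      obtain ⟨g1, g2, g3, g4, g5, -⟩ := h
      have h1 := hultra d x c g1 g2 g3 (g4.trans g5.symm)
      have h2 := hmax' x c hx hc hxc
      rw [g4, ← g5, hsymm d c hcd.symm] at h1
      exact absurd h1 (not_lt.mpr h2)
  have ca := hout a ha.1 ha.2.1 ha.2.2
  have cb := hout b hb.1 hb.2.1 hb.2.2
  obtain ⟨a1, a2, -, a4, a5, a6, -⟩ := ca
  obtain ⟨b1, b2, -, b4, b5, b6, -⟩ := cb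
  have hlt : (ω s(c, d)).1 < e a b := by
    have h1 : e c a = (ω s(c, d)).1 := (hsymm c a a1.symm).trans a4
    have h2 : e c b = (ω s(c, d)).1 := (hsymm c b b1.symm).trans b4
    have := hultra c a b a1.symm b1.symm hab (h1.trans h2.symm)
    rwa [h1] at this
  have hin : ∀ x, x ∈ Q → a ≠ x → b ≠ x → e a x = (ω s(c, d)).1 → e b x = (ω s(c, d)).1 →
      CondO e z (ω s(a, b)) x a b := by
    intro x hx hax hbx h1 h2
    rcases hthree a b x ha.1 hb.1 hx hab hax hbx with h | h | h
    · exfalso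
      obtain ⟨-, -, -, g4, g5, -⟩ := h
      rw [g4.trans g5.symm, h1] at hlt
      exact lt_irrefl _ hlt
    · exfalso
      obtain ⟨-, -, -, g4, g5, -⟩ := h
      rw [hsymm a b hab, g4.trans g5.symm, h2] at hlt
      exact lt_irrefl _ hlt
    · exact h
  obtain ⟨-, -, -, -, -, -, k1⟩ := hin c hc a1 b1 a4 b4
  obtain ⟨-, -, -, -, -, -, k2⟩ := hin d hd a2 b2 a5 b5
  have hz := a6.trans b6.symm
  exact (he c d hcd).1 ((k1 _ hz).trans (k2 _ hz).symm)

theorem exists_good_omega (D p m : ℕ) [Fact p.Prime] (hm0 : 0 < m) (hDm : D ≤ m)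
    (e : (Fin m → Bool) → (Fin m → Bool) → Fin m)
    (z : (Fin m → Bool) → Fin m → ZMod p)
    (hz : ∀ c d, c ≠ d → (Finset.univ.filter (fun r => z c r = z d r)).card ≤ D)
    (K n' : ℕ) (hK : K = m * p * 2 ^ D) (hn' : n' = 6 * m * K + 1) :
    ∃ ω : Sym2 (Fin m → Bool) → Fin m × ZMod p × (Fin m → Bool),
      ∀ v (S : Finset (Fin m → Bool)), v ∉ S → S.card = n' → (∃ s, ∀ c ∈ S, e v c = s) →
        ∃ c ∈ S, ∃ d ∈ S, c ≠ d ∧ CondO e z (ω s(c, d)) v c d := by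
  classical
  have hp0 : 0 < p := (Fact.out : p.Prime).pos
  have hK0 : 0 < K := by rw [hK]; positivity
  have : Nonempty (Fin m × ZMod p × (Fin m → Bool)) := ⟨(⟨0, hm0⟩, 0, fun _ => false)⟩
  set I : Finset ((Fin m → Bool) × Finset (Fin m → Bool)) :=
    (Finset.univ ×ˢ (Finset.univ.powersetCard n')).filter
      (fun i => i.1 ∉ i.2 ∧ ∃ s, ∀ c ∈ i.2, e i.1 c = s) with hI
  have hIcard : I.card ≤ 2 ^ (m * (n' + 1)) := by
    refine (Finset.card_filter_le _ _).trans ?_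
    rw [Finset.card_product, Finset.card_powersetCard, Finset.card_univ, Fintype.card_fun,
      Fintype.card_bool, Fintype.card_fin, pow_mul, pow_succ, mul_comm]
    exact Nat.mul_le_mul_right _ (Nat.choose_le_pow _ _)
  obtain ⟨ω, hω⟩ := union_bound_exists (Q := Sym2 (Fin m → Bool))
    (Ω := Fin m × ZMod p × (Fin m → Bool)) I
    (fun i => i.2.offDiag.image (Function.uncurry Sym2.mk))
    (fun i q => Finset.univ.filter (fun o => ∃ c d, q = s(c, d) ∧ c ≠ d ∧ CondO e z o i.1 c d))
    K (n'.choose 2) hK0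
    (by
      intro i hi
      rw [hI, Finset.mem_filter, Finset.mem_product, Finset.mem_powersetCard] at hi
      rw [Sym2.card_image_offDiag, hi.1.2.2])
    (by
      intro i hi q hq
      rw [hI, Finset.mem_filter] at hi
      obtain ⟨-, hv, s, hs⟩ := hi
      rw [Finset.mem_image] at hq
      obtain ⟨⟨c, d⟩, hcd, rfl⟩ := hq
      rw [Finset.mem_offDiag] at hcd
      obtain ⟨hc, hd, hcd⟩ := hcd
      set A := Finset.univ.filter (fun r => z c r = z d r) with hA
      have hsub : ({s} : Finset (Fin m)) ×ˢ (({z i.1 (e c d)} : Finset (ZMod p)) ×ˢ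
          (Fintype.piFinset (fun r => if r ∈ A then {i.1 r} else Finset.univ) :
            Finset (Fin m → Bool))) ⊆
          Finset.univ.filter (fun o => ∃ c' d', Function.uncurry Sym2.mk (c, d) = s(c', d') ∧
            c' ≠ d' ∧ CondO e z o i.1 c' d') := by
        rintro ⟨o1, o2, o3⟩ ho
        rw [Finset.mem_product, Finset.mem_product, Fintype.mem_piFinset] at ho
        obtain ⟨h1, h2, h3⟩ := ho
        simp only [Finset.mem_singleton] at h1 h2
        subst h1 h2
        rw [Finset.mem_filter]
        refine ⟨Finset.mem_univ _, c, d, rfl, hcd, ?_⟩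
        refine ⟨fun h => hv (h ▸ hc), fun h => hv (h ▸ hd), hcd, hs c hc, hs d hd, rfl, ?_⟩
        intro r hr
        have hr' : r ∈ A := by simp [hA, hr]
        have := h3 r
        rw [if_pos hr', Finset.mem_singleton] at this
        exact this.symm
      refine le_trans ?_ (Nat.mul_le_mul_left K (Finset.card_le_card hsub))
      rw [Finset.card_product, Finset.card_product, Finset.card_singleton, Finset.card_singleton,
        Fintype.card_piFinset]
      have hprod : ∏ r : Fin m, (if r ∈ A then ({i.1 r} : Finset Bool) else Finset.univ).card
          = 2 ^ (Aᶜ).card := by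
        rw [← Finset.prod_const, ← Finset.univ_inter Aᶜ, ← Finset.prod_ite_mem]
        apply Finset.prod_congr rfl
        intro r _
        by_cases hr : r ∈ A <;> simp [hr]
      rw [hprod, Fintype.card_prod, Fintype.card_prod, Fintype.card_fun, Fintype.card_fin,
        ZMod.card, Fintype.card_bool, hK]
      have hAc : A.card + Aᶜ.card = m := by
        rw [Finset.card_add_card_compl, Fintype.card_fin]
      have hAD : A.card ≤ D := hz c d hcd
      have h5 : 2 ^ m ≤ 2 ^ D * 2 ^ (Aᶜ).card := by
        rw [← pow_add]
        exact Nat.pow_le_pow_right (by norm_num) (by omega)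
      calc m * (p * 2 ^ m) ≤ m * (p * (2 ^ D * 2 ^ (Aᶜ).card)) := by gcongr
        _ = _ := by ring)
    (by
      have hKr : (0 : ℝ) < K := by exact_mod_cast hK0
      have hL : K * (m * (n' + 1)) ≤ n'.choose 2 := by
        rw [Nat.choose_two_right, Nat.le_div_iff_mul_le (by norm_num)]
        have h1 : n' - 1 = 6 * m * K := by omega
        rw [h1]
        have h2 : 1 ≤ n' := by omega
        have h3 : 0 < K * m := by positivity
        nlinarith
      have hL' : (K : ℝ) * (m * (n' + 1)) ≤ (n'.choose 2 : ℕ) := by exact_mod_cast hL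
      have h1 : (1 - 1 / (K : ℝ)) ^ (n'.choose 2) ≤ Real.exp (-((m * (n' + 1) : ℕ) : ℝ)) := by
        have h2 : 1 - 1 / (K : ℝ) ≤ Real.exp (-(1 / (K : ℝ))) := Real.one_sub_le_exp_neg _
        have h3 : 0 ≤ 1 - 1 / (K : ℝ) := by
          rw [sub_nonneg, div_le_one hKr]; exact_mod_cast hK0
        refine (pow_le_pow_left₀ h3 h2 _).trans ?_
        rw [← Real.exp_nat_mul, Real.exp_le_exp]
        have h4 : ((m * (n' + 1) : ℕ) : ℝ) ≤ (n'.choose 2 : ℕ) * (1 / (K : ℝ)) := by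
          rw [mul_one_div, le_div_iff₀ hKr]
          push_cast
          linarith
        linarith
      have h5 : (I.card : ℝ) ≤ 2 ^ (m * (n' + 1)) := by exact_mod_cast hIcard
      have h6 : (0 : ℝ) < Real.exp (-((m * (n' + 1) : ℕ) : ℝ)) := Real.exp_pos _
      calc (I.card : ℝ) * (1 - 1 / (K : ℝ)) ^ (n'.choose 2)
          ≤ 2 ^ (m * (n' + 1)) * Real.exp (-((m * (n' + 1) : ℕ) : ℝ)) := by
            apply mul_le_mul h5 h1 _ (by positivity)
            apply pow_nonneg
            rw [sub_nonneg, div_le_one hKr]; exact_mod_cast hK0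
        _ < Real.exp ((m * (n' + 1) : ℕ) : ℝ) * Real.exp (-((m * (n' + 1) : ℕ) : ℝ)) := by
            apply mul_lt_mul_of_pos_right _ h6
            rw [← mul_one (((m * (n' + 1) : ℕ) : ℝ)), Real.exp_nat_mul]
            apply pow_lt_pow_left₀ _ (by norm_num) (by positivity)
            have := Real.exp_one_gt_d9
            linarith
        _ = 1 := by rw [← Real.exp_add]; simp)
  refine ⟨ω, ?_⟩
  intro v S hv hS hs
  obtain ⟨q, hq, hq'⟩ := hω (v, S) (by
    rw [hI, Finset.mem_filter, Finset.mem_product, Finset.mem_powersetCard]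
    exact ⟨⟨Finset.mem_univ _, Finset.subset_univ _, hS⟩, hv, hs⟩)
  rw [Finset.mem_filter] at hq'
  obtain ⟨-, c, d, rfl, hcd, hcond⟩ := hq'
  rw [Finset.mem_image] at hq
  obtain ⟨⟨c', d'⟩, hcd', heq⟩ := hq
  rw [Finset.mem_offDiag] at hcd'
  have heq' : s(c', d') = s(c, d) := heq
  rw [Sym2.eq_iff] at heq'
  rcases heq' with ⟨rfl, rfl⟩ | ⟨rfl, rfl⟩
  · exact ⟨_, hcd'.1, _, hcd'.2.1, hcd, hcond⟩
  · exact ⟨_, hcd'.2.1, _, hcd'.1, hcd, hcond⟩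

theorem sq_le_two_pow (D : ℕ) (hD : 4 ≤ D) : D * D ≤ 2 ^ D := by
  induction D, hD using Nat.le_induction with
  | base => norm_num
  | succ k hk ih => rw [pow_succ]; nlinarith

theorem lower_main (D n N : ℕ) (hD : 4 ≤ D) (hn : 2 ^ (9 * D) ≤ n) (hN : N ≤ 2 ^ (D * D)) :
    ∃ χ : Finset (Fin N) → Bool, ¬ HasRedK5e N χ ∧ ¬ HasBlueStar N n χ := by
  classical
  have hsq := sq_le_two_pow D hD
  obtain ⟨p, hp, hp1, hp2⟩ := Nat.exists_prime_lt_and_le_two_mul (2 ^ D) (by positivity)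
  have : Fact p.Prime := ⟨hp⟩
  obtain ⟨m, hm⟩ : ∃ m, m = D * D := ⟨_, rfl⟩
  have hm0 : 0 < m := by rw [hm]; positivity
  obtain ⟨z, hz⟩ := rs_code D p m hm (by omega) hp1.le
  obtain ⟨e, he⟩ := exists_first_diff m hm0
  obtain ⟨n', hn'⟩ : ∃ n', n' = 6 * m * (m * p * 2 ^ D) + 1 := ⟨_, rfl⟩
  obtain ⟨ω, hω⟩ := exists_good_omega D p m hm0 (by rw [hm]; nlinarith) e z hz _ n' rfl hn'
  have hmn : m * n' ≤ n := by
    refine le_trans ?_ hn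
    rw [hn']
    have h1 : m ≤ 2 ^ D := hm ▸ hsq
    have h2 : 1 ≤ 2 ^ D := Nat.one_le_two_pow
    have h16 : 16 ≤ 2 ^ D := by
      calc 16 = 2 ^ 4 := by norm_num
        _ ≤ _ := Nat.pow_le_pow_right (by norm_num) hD
    calc m * (6 * m * (m * p * 2 ^ D) + 1)
        ≤ 2 ^ D * (6 * 2 ^ D * (2 ^ D * (2 * 2 ^ D) * 2 ^ D) + 1) := by gcongr
      _ ≤ 16 * (2 ^ D) ^ 5 := by
          generalize 2 ^ D = x at h2
          have : x ≤ x ^ 5 := Nat.le_self_pow (by norm_num) x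
          have e1 : x * (6 * x * (x * (2 * x) * x) + 1) = 12 * x ^ 5 + x := by ring
          omega
      _ ≤ 2 ^ D * (2 ^ D) ^ 5 := Nat.mul_le_mul_right _ h16
      _ = 2 ^ (6 * D) := by rw [← pow_succ', ← pow_mul]; congr 1; ring
      _ ≤ 2 ^ (9 * D) := Nat.pow_le_pow_right (by norm_num) (by omega)
  obtain ⟨f⟩ : Nonempty (Fin N ↪ (Fin m → Bool)) :=
    Function.Embedding.nonempty_of_card_le (by simpa [hm] using hN)
  refine ⟨fun T => decide (RedT e z ω (T.map f)), ?_, ?_⟩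
  · rintro ⟨S, hS, h9⟩
    have hbad : ((S.powersetCard 3).filter
        (fun T => ¬ decide (RedT e z ω (T.map f)) = true)).card ≤ 1 := by
      have h1 := Finset.card_filter_add_card_filter_not (s := S.powersetCard 3)
        (fun T => decide (RedT e z ω (T.map f)) = true)
      have h2 : (S.powersetCard 3).card = 10 := by
        rw [Finset.card_powersetCard, hS]; rfl
      have h9' : 9 ≤ ((S.powersetCard 3).filter
        (fun T => decide (RedT e z ω (T.map f)) = true)).card := h9
      omega
    obtain ⟨x, hxS, hx⟩ : ∃ x ∈ S, ∀ T ∈ S.powersetCard 3, ¬ RedT e z ω (T.map f) → x ∈ T := by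
      rcases Finset.eq_empty_or_nonempty ((S.powersetCard 3).filter
        (fun T => ¬ decide (RedT e z ω (T.map f)) = true)) with h | ⟨T0, hT0⟩
      · obtain ⟨x, hx⟩ := Finset.card_pos.mp (by omega : 0 < S.card)
        refine ⟨x, hx, fun T hT hr => ?_⟩
        have : T ∈ (∅ : Finset (Finset (Fin N))) := by
          rw [← h, Finset.mem_filter]
          exact ⟨hT, by simpa using hr⟩
        simp at this
      · have h3 := Finset.mem_powersetCard.mp (Finset.mem_filter.mp hT0).1
        obtain ⟨x, hx⟩ := Finset.card_pos.mp (by omega : 0 < T0.card)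
        refine ⟨x, h3.1 hx, fun T hT hr => ?_⟩
        have h4 : T ∈ (S.powersetCard 3).filter
            (fun T => ¬ decide (RedT e z ω (T.map f)) = true) := by
          rw [Finset.mem_filter]
          exact ⟨hT, by simpa using hr⟩
        rw [Finset.card_le_one.mp hbad _ h4 _ hT0]
        exact hx
    apply no_red_K4 e he z ω ((S.erase x).map f)
    · rw [Finset.card_map, Finset.card_erase_of_mem hxS, hS]
    · intro T hT hTc
      obtain ⟨T', hT', rfl⟩ := Finset.subset_map_iff.mp hT
      by_contra hr
      have h5 := hx T' (Finset.mem_powersetCard.mpr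
        ⟨hT'.trans (Finset.erase_subset _ _), by simpa using hTc⟩) hr
      exact absurd (hT' h5) (Finset.notMem_erase _ _)
  · rintro ⟨v, S, hv, hS, hblue⟩
    obtain ⟨s, -, hs⟩ := Finset.exists_le_card_fiber_of_mul_le_card_of_maps_to
      (s := S) (t := (Finset.univ : Finset (Fin m))) (f := fun a => e (f v) (f a)) (n := n')
      (fun _ _ => Finset.mem_univ _) ⟨⟨0, hm0⟩, Finset.mem_univ _⟩
      (by rw [Finset.card_univ, Fintype.card_fin, hS]; exact hmn)
    obtain ⟨S', hS', hS'c⟩ := Finset.exists_subset_card_eq hs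
    have hmem : ∀ a ∈ S', a ∈ S ∧ e (f v) (f a) = s := fun a ha => Finset.mem_filter.mp (hS' ha)
    obtain ⟨c, hc, d, hd, hcd, hcond⟩ := hω (f v) (S'.map f)
      (by
        intro h
        rw [Finset.mem_map'] at h
        exact hv (hmem v h).1)
      (by rw [Finset.card_map, hS'c])
      ⟨s, by
        intro c hc
        obtain ⟨a, ha, rfl⟩ := Finset.mem_map.mp hc
        exact (hmem a ha).2⟩
    obtain ⟨a, ha, rfl⟩ := Finset.mem_map.mp hc
    obtain ⟨b, hb, rfl⟩ := Finset.mem_map.mp hd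
    have h6 := hblue a (hmem a ha).1 b (hmem b hb).1 (fun h => hcd (h ▸ rfl))
    have h7 : ¬ RedT e z ω (({v, a, b} : Finset (Fin N)).map f) := by simpa using h6
    exact h7 ⟨f v, f a, f b, by simp [Finset.map_insert], hcond⟩

/-- There are `c, c' > 0` such that for all sufficiently large `n`:
`2^(c (log₂ n)²) ≤ r(K₅⁽³⁾ − e, Sₙ) ≤ 2^(c' n^(2/3) log₂ n)`. -/
theorem K5e_star_bounds :
    ∃ c : ℝ, ∃ c' : ℝ, 0 < c ∧ 0 < c' ∧ ∃ n₀ : ℕ, ∀ n : ℕ, n₀ ≤ n →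
      (2 : ℝ) ^ (c * (Real.logb 2 n) ^ 2) ≤ (ramseyK5eStar n : ℝ) ∧
      (ramseyK5eStar n : ℝ) ≤ (2 : ℝ) ^ (c' * (n : ℝ) ^ ((2 : ℝ) / 3) * Real.logb 2 n) := by
  refine ⟨1 / 400, 600, by norm_num, by norm_num, 2 ^ 36, ?_⟩
  intro n hn
  obtain ⟨N0, hN0, hN0'⟩ := upper_real n (le_trans (by norm_num) hn)
  have hmem : ramseyK5eStar n ∈
      {N : ℕ | ∀ χ : Finset (Fin N) → Bool, HasRedK5e N χ ∨ HasBlueStar N n χ} :=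
    Nat.sInf_mem ⟨N0, hN0⟩
  constructor
  · set L := Nat.log 2 n with hL
    have hn0 : n ≠ 0 := by
      have : 0 < 2 ^ 36 := by norm_num
      omega
    have hL36 : 36 ≤ L := Nat.le_log_of_pow_le (by norm_num) hn
    obtain ⟨D, hD⟩ : ∃ D, D = L / 9 := ⟨_, rfl⟩
    have hD4 : 4 ≤ D := by omega
    have hDn : 2 ^ (9 * D) ≤ n := by
      refine le_trans (Nat.pow_le_pow_right (by norm_num) (by omega : 9 * D ≤ L)) ?_
      exact Nat.pow_log_le_self 2 hn0
    have hgt : 2 ^ (D * D) < ramseyK5eStar n := by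
      by_contra hc
      obtain ⟨χ, h1, h2⟩ := lower_main D n (ramseyK5eStar n) hD4 hDn (not_lt.mp hc)
      rcases hmem χ with h | h
      · exact h1 h
      · exact h2 h
    have hlog0 : 0 ≤ Real.logb 2 n :=
      Real.logb_nonneg (by norm_num) (by exact_mod_cast Nat.one_le_iff_ne_zero.mpr hn0)
    have hlog : Real.logb 2 n ≤ 20 * D := by
      have h1 : n < 2 ^ (L + 1) := Nat.lt_pow_succ_log_self (by norm_num) n
      have h2 : n ≤ 2 ^ (20 * D) :=
        h1.le.trans (Nat.pow_le_pow_right (by norm_num) (by omega))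
      have h3 : (n : ℝ) ≤ (2 : ℝ) ^ ((20 * D : ℕ) : ℝ) := by
        rw [Real.rpow_natCast]; exact_mod_cast h2
      rw [Real.logb_le_iff_le_rpow (by norm_num) (by exact_mod_cast Nat.pos_of_ne_zero hn0)]
      simpa using h3
    have h4 : (2 : ℝ) ^ (1 / 400 * (Real.logb 2 n) ^ 2) ≤ (2 : ℝ) ^ ((D * D : ℕ) : ℝ) := by
      apply Real.rpow_le_rpow_of_exponent_le (by norm_num)
      push_cast
      nlinarith
    refine h4.trans ?_
    rw [Real.rpow_natCast]
    exact_mod_cast hgt.le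
  · refine le_trans ?_ hN0'
    have h5 : ramseyK5eStar n ≤ N0 := Nat.sInf_le (s := {N : ℕ |
      ∀ χ : Finset (Fin N) → Bool, HasRedK5e N χ ∨ HasBlueStar N n χ}) hN0
    exact_mod_cast h5
end

section
/- Let N and n be positive integers such that every red/blue coloring of the edges of the complete graph K_N contains a red triangle or a blue clique K_n. Then every 2-coloring of K_{N+1}^(3) contains a red copy of K_4^(3) − e or a blue copy of S_n. Consequently, r(K_4^(3) − e, S_n) ≤ r(K_3, K_n) + 1. -/
/-- A red triangle in an edge-coloring of `K_N` (red = `true`). -/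
def HasRedTriangle (N : ℕ) (χ : Sym2 (Fin N) → Bool) : Prop :=
  ∃ a b c : Fin N, a ≠ b ∧ a ≠ c ∧ b ≠ c ∧
    χ s(a, b) = true ∧ χ s(a, c) = true ∧ χ s(b, c) = true

/-- A blue `K_n` in an edge-coloring of `K_N` (blue = `false`). -/
def HasBlueClique (N n : ℕ) (χ : Sym2 (Fin N) → Bool) : Prop :=
  ∃ S : Finset (Fin N), S.card = n ∧ ∀ a ∈ S, ∀ b ∈ S, a ≠ b → χ s(a, b) = false

/-- A red copy of `K₄⁽³⁾ − e`: a 4-element vertex set with at least three of its four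
3-element subsets red (red = `true`). -/
def HasRedK4e (N : ℕ) (χ : Finset (Fin N) → Bool) : Prop :=
  ∃ S : Finset (Fin N), S.card = 4 ∧
    3 ≤ ((S.powersetCard 3).filter fun T => χ T = true).card

/-- The graph Ramsey number `r(K₃, K_n)`. -/
noncomputable def graphRamsey3 (n : ℕ) : ℕ :=
  sInf {N : ℕ | ∀ χ : Sym2 (Fin N) → Bool, HasRedTriangle N χ ∨ HasBlueClique N n χ}

/-- The Ramsey number `r(K₄⁽³⁾ − e, Sₙ)`. -/
noncomputable def ramseyK4eStar (n : ℕ) : ℕ :=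
  sInf {N : ℕ | ∀ χ : Finset (Fin N) → Bool, HasRedK4e N χ ∨ HasBlueStar N n χ}

/-- The link of vertex `0` transfers the graph statement to the hypergraph statement. -/
theorem link_step (N n : ℕ)
    (h : ∀ χ : Sym2 (Fin N) → Bool, HasRedTriangle N χ ∨ HasBlueClique N n χ) :
    ∀ χ : Finset (Fin (N + 1)) → Bool,
      HasRedK4e (N + 1) χ ∨ HasBlueStar (N + 1) n χ := by
  intro χ
  have key : ∀ a b : Fin N,
      insert (0 : Fin (N + 1)) ((s(a, b)).toFinset.image Fin.succ) = {0, a.succ, b.succ} := by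
    intro a b
    ext x
    simp [Sym2.mem_toFinset, eq_comm]
  rcases h (fun e => χ (insert 0 (e.toFinset.image Fin.succ))) with
    ⟨a, b, c, hab, hac, hbc, h1, h2, h3⟩ | ⟨S, hS, hb⟩
  · left
    simp only [key] at h1 h2 h3
    have a0 := Fin.succ_ne_zero a
    have b0 := Fin.succ_ne_zero b
    have c0 := Fin.succ_ne_zero c
    have hab' : a.succ ≠ b.succ := fun e => hab (Fin.succ_injective _ e)
    have hac' : a.succ ≠ c.succ := fun e => hac (Fin.succ_injective _ e)
    have hbc' : b.succ ≠ c.succ := fun e => hbc (Fin.succ_injective _ e)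
    generalize a.succ = x at *
    generalize b.succ = y at *
    generalize c.succ = z at *
    have card3 : ∀ u v : Fin (N + 1), u ≠ 0 → v ≠ 0 → u ≠ v →
        ({0, u, v} : Finset (Fin (N + 1))).card = 3 := by
      intro u v hu hv huv
      exact Finset.card_eq_three.mpr ⟨0, u, v, hu.symm, hv.symm, huv, rfl⟩
    refine ⟨{0, x, y, z}, ?_, ?_⟩
    · rw [Finset.card_insert_of_notMem (by simp [a0.symm, b0.symm, c0.symm]),
        Finset.card_eq_three.mpr ⟨x, y, z, hab', hac', hbc', rfl⟩]
    · have hsub : ({{0, x, y}, {0, x, z}, {0, y, z}} : Finset (Finset (Fin (N + 1)))) ⊆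
          ((({0, x, y, z} : Finset (Fin (N + 1))).powersetCard 3).filter
            fun T => χ T = true) := by
        intro T hT
        simp only [Finset.mem_insert, Finset.mem_singleton] at hT
        rw [Finset.mem_filter, Finset.mem_powersetCard]
        rcases hT with rfl | rfl | rfl
        · exact ⟨⟨by intro t; simp; tauto, card3 _ _ a0 b0 hab'⟩, h1⟩
        · exact ⟨⟨by intro t; simp; tauto, card3 _ _ a0 c0 hac'⟩, h2⟩
        · exact ⟨⟨by intro t; simp; tauto, card3 _ _ b0 c0 hbc'⟩, h3⟩
      refine le_trans (le_of_eq ?_) (Finset.card_le_card hsub)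
      symm
      refine Finset.card_eq_three.mpr ⟨_, _, _, ?_, ?_, ?_, rfl⟩
      · intro e
        have : y ∈ ({0, x, z} : Finset (Fin (N + 1))) := by rw [← e]; simp
        simp [b0, hab'.symm, hbc'] at this
      · intro e
        have : x ∈ ({0, y, z} : Finset (Fin (N + 1))) := by rw [← e]; simp
        simp [a0, hab', hac'] at this
      · intro e
        have : x ∈ ({0, y, z} : Finset (Fin (N + 1))) := by rw [← e]; simp
        simp [a0, hab', hac'] at this
  · right
    refine ⟨0, S.image Fin.succ, ?_, ?_, ?_⟩
    · simp [Fin.succ_ne_zero]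
    · rw [Finset.card_image_of_injective _ (Fin.succ_injective _), hS]
    · intro a ha b hb' hne
      obtain ⟨a, ha2, rfl⟩ := Finset.mem_image.mp ha
      obtain ⟨b, hb2, rfl⟩ := Finset.mem_image.mp hb'
      have := hb a ha2 b hb2 (fun e => hne (by rw [e]))
      simpa only [key] using this

/-- If every red/blue edge-coloring of `K_N` contains a red triangle or a blue `K_n`,
then every 2-coloring of `K_{N+1}^(3)` contains a red `K₄⁽³⁾ − e` or a blue `Sₙ`.
Consequently, `r(K₄⁽³⁾ − e, Sₙ) ≤ r(K₃, K_n) + 1`. -/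
theorem K4e_star_le_triangle_ramsey (N n : ℕ) (hN : 0 < N) (hn : 0 < n)
    (h : ∀ χ : Sym2 (Fin N) → Bool, HasRedTriangle N χ ∨ HasBlueClique N n χ) :
    (∀ χ : Finset (Fin (N + 1)) → Bool,
      HasRedK4e (N + 1) χ ∨ HasBlueStar (N + 1) n χ) ∧
    ramseyK4eStar n ≤ graphRamsey3 n + 1 := by
  refine ⟨link_step N n h, ?_⟩
  have hmem : graphRamsey3 n ∈
      {N : ℕ | ∀ χ : Sym2 (Fin N) → Bool, HasRedTriangle N χ ∨ HasBlueClique N n χ} :=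
    Nat.sInf_mem ⟨N, h⟩
  exact Nat.sInf_le (link_step _ n hmem)
end
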